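/- Let R be a finite subgroup of O(3) with R not contained in SO(3), and suppose pr(R) is conjugate in O(3) to the octahedral group O. Then R is conjugate in O(3) either to O × Z = {±g : g ∈ O} or to the group ⟨T, −o₀⟩ = T ∪ {−g : g ∈ O \ T}, where o₀ is any element of O \ T. -/

import Mathlib

/-! Conjugating, one may assume `pr(R) = O`, so that for every `g ∈ O` at least one of `g`, `-g`
lies in `R`, and `R ⊆ {±g : g ∈ O}`. If `-1 ∈ R`, then `R = O × Z`.

Suppose `-1 ∉ R`, so exactly one of `g`, `-g` lies in `R` for each `g ∈ O`. Either way `g² ∈ R`;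
since every element of `T` is the square of an element of `O` (`tetra_sq`), `T ⊆ R`. As `T` has
index two in `O` (`mul_transpose_mem_tetra`), a rotation in `R` outside `T` would force `O ⊆ R`,
and then `R = O ⊆ SO(3)`, which is excluded. Hence the rotations in `R` are exactly `T`, and
`R = T ∪ {-g : g ∈ O \ T}`.

The facts about `O` and `T` come from writing octahedral rotations as signed permutation matrices
(`octa_signedPerm`): they preserve the cube `{±1/3}³`, whose vertices with positive coordinate
product are those of the tetrahedron, and either preserve or flip the sign of that product. -/


/-! Setup: `O(3)` is the group of 3×3 real orthogonal matrices, `SO(3)` the subgroup of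
determinant-one matrices, and `pr : O(3) → SO(3)`, `A ↦ det A · A` (kernel `Z = {±1}`).
Subgroups of `O(3)` are modelled as subsets of the matrix ring that contain `1`, are
closed under multiplication and under transpose (which is the inverse in `O(3)`). -/

noncomputable section
open Matrix

abbrev M3 : Type := Matrix (Fin 3) (Fin 3) ℝ

/-- The set of orthogonal 3×3 real matrices. -/
def O3 : Set M3 := {A : M3 | A * Aᵀ = 1 ∧ Aᵀ * A = 1}

/-- The set of special orthogonal 3×3 real matrices. -/
def SO3 : Set M3 := {A : M3 | A ∈ O3 ∧ A.det = 1}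

/-- `R` is a subgroup of `O(3)` (inverses in `O(3)` are transposes). -/
structure IsSubgroupO3 (R : Set M3) : Prop where
  subset_O3 : R ⊆ O3
  one_mem : (1 : M3) ∈ R
  mul_mem : ∀ ⦃A B : M3⦄, A ∈ R → B ∈ R → A * B ∈ R
  transpose_mem : ∀ ⦃A : M3⦄, A ∈ R → Aᵀ ∈ R

/-- The homomorphism `pr : O(3) → SO(3)`, `A ↦ det A • A`. -/
def pr (A : M3) : M3 := A.det • A

/-- The image `pr(R)`. -/
def prS (R : Set M3) : Set M3 := pr '' R

/-- Two subsets of `O(3)` are conjugate in `O(3)`. -/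
def ConjO3 (R S : Set M3) : Prop := ∃ P ∈ O3, S = (fun A => P * A * Pᵀ) '' R

/-- The subgroup of `O(3)` generated by a subset.  (For subsets of `O(3)` that are closed
under inverses -- in particular finite-order generators or inverse-closed sets -- the
submonoid closure coincides with the generated subgroup.) -/
def gen (S : Set M3) : Set M3 := (Submonoid.closure S : Set M3)

/-- `K × Z = {±g : g ∈ K}`, the internal direct product with the center `Z = {1, -1}`. -/
def prodZ (K : Set M3) : Set M3 := K ∪ (fun A : M3 => -A) '' K

/-- The rotation through angle `θ` around the `z`-axis. -/
def rotZ (θ : ℝ) : M3 :=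
  !![Real.cos θ, -Real.sin θ, 0; Real.sin θ, Real.cos θ, 0; 0, 0, 1]

/-- `a_n`: the rotation through `2π/n` around the `z`-axis. -/
def aRot (n : ℕ) : M3 := rotZ (2 * Real.pi / n)

/-- `b`: the rotation through `π` around the `x`-axis. -/
def bRot : M3 := !![1, 0, 0; 0, -1, 0; 0, 0, -1]

/-- `Z_n = ⟨a_n⟩`. -/
def cyclicZ (n : ℕ) : Set M3 := gen {aRot n}

/-- `D_n = ⟨a_n, b⟩`. -/
def dihedralD (n : ℕ) : Set M3 := gen {aRot n, bRot}

/-- The vertex set of the regular tetrahedron. -/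
def vT : Set (Fin 3 → ℝ) :=
  {![1/3, 1/3, 1/3], ![-1/3, -1/3, 1/3], ![-1/3, 1/3, -1/3], ![1/3, -1/3, -1/3]}

/-- The tetrahedral group `T`. -/
def tetra : Set M3 := {g : M3 | g ∈ SO3 ∧ (fun v => g.mulVec v) '' vT = vT}

/-- The vertex set of the regular octahedron. -/
def vO : Set (Fin 3 → ℝ) :=
  {![1, 0, 0], ![-1, 0, 0], ![0, 1, 0], ![0, -1, 0], ![0, 0, 1], ![0, 0, -1]}

/-- The octahedral group `O`. -/
def octa : Set M3 := {g : M3 | g ∈ SO3 ∧ (fun v => g.mulVec v) '' vO = vO}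

/-! ### Stabilisers of finite vertex sets -/

theorem SO3_mul {A B : M3} (hA : A ∈ SO3) (hB : B ∈ SO3) : A * B ∈ SO3 := by
  obtain ⟨⟨a1, a2⟩, a3⟩ := hA
  obtain ⟨⟨b1, b2⟩, b3⟩ := hB
  refine ⟨⟨?_, ?_⟩, by rw [det_mul, a3, b3, one_mul]⟩
  · rw [transpose_mul, Matrix.mul_assoc, ← Matrix.mul_assoc B, b1, Matrix.one_mul, a1]
  · rw [transpose_mul, Matrix.mul_assoc, ← Matrix.mul_assoc Aᵀ, a2, Matrix.one_mul, b2]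

theorem SO3_transpose {A : M3} (hA : A ∈ SO3) : Aᵀ ∈ SO3 := by
  obtain ⟨⟨a1, a2⟩, a3⟩ := hA
  exact ⟨⟨by simpa using a2, by simpa using a1⟩, by rw [det_transpose, a3]⟩

theorem mulVec_inj {A : M3} (hA : A ∈ SO3) : Function.Injective (fun v => A.mulVec v) := by
  intro v w h
  have := congrArg (fun v => Aᵀ.mulVec v) h
  simpa [mulVec_mulVec, hA.1.2] using this

theorem image_eq_of_mapsTo {A : M3} (hA : A ∈ SO3) {V : Set (Fin 3 → ℝ)} (hV : V.Finite)
    (h : ∀ v ∈ V, A.mulVec v ∈ V) : (fun v => A.mulVec v) '' V = V :=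
  ((hV.injOn_iff_bijOn_of_mapsTo h).1 (mulVec_inj hA).injOn).image_eq

theorem image_transpose {A : M3} (hA : A ∈ SO3) {V : Set (Fin 3 → ℝ)}
    (h : (fun v => A.mulVec v) '' V = V) : (fun v => Aᵀ.mulVec v) '' V = V := by
  conv_lhs => rw [← h]
  simp [Set.image_image, mulVec_mulVec, hA.1.2]

theorem finite_vT : vT.Finite := by simp [vT]

theorem finite_vO : vO.Finite := by simp [vO]

theorem octa_map {A : M3} (hA : A ∈ octa) {v : Fin 3 → ℝ} (hv : v ∈ vO) : A.mulVec v ∈ vO := by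
  have := Set.mem_image_of_mem (fun v => A.mulVec v) hv
  rwa [hA.2] at this

theorem tetra_map {A : M3} (hA : A ∈ tetra) {v : Fin 3 → ℝ} (hv : v ∈ vT) : A.mulVec v ∈ vT := by
  have := Set.mem_image_of_mem (fun v => A.mulVec v) hv
  rwa [hA.2] at this

theorem octa_mul {A B : M3} (hA : A ∈ octa) (hB : B ∈ octa) : A * B ∈ octa := by
  refine ⟨SO3_mul hA.1 hB.1, image_eq_of_mapsTo (SO3_mul hA.1 hB.1) finite_vO fun v hv => ?_⟩
  rw [← mulVec_mulVec]
  exact octa_map hA (octa_map hB hv)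

theorem octa_transpose {A : M3} (hA : A ∈ octa) : Aᵀ ∈ octa :=
  ⟨SO3_transpose hA.1, image_transpose hA.1 hA.2⟩

theorem tetra_transpose {A : M3} (hA : A ∈ tetra) : Aᵀ ∈ tetra :=
  ⟨SO3_transpose hA.1, image_transpose hA.1 hA.2⟩

/-! ### Octahedral rotations as signed permutation matrices -/

/-- The tetrahedron's vertices are the vertices of the cube `{±1/3}³` with positive coordinate
product. -/
theorem mem_vT_iff (v : Fin 3 → ℝ) :
    v ∈ vT ↔ (∀ i, v i = 1/3 ∨ v i = -1/3) ∧ ∏ i, v i = 1/27 := by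
  constructor
  · intro h
    simp only [vT, Set.mem_insert_iff, Set.mem_singleton_iff] at h
    rcases h with rfl | rfl | rfl | rfl <;>
      refine ⟨fun i => ?_, ?_⟩ <;> try (fin_cases i <;> simp)
    all_goals simp [Fin.prod_univ_three]; norm_num
  · rintro ⟨h, hp⟩
    have hv : v = ![v 0, v 1, v 2] := by ext i; fin_cases i <;> rfl
    rw [Fin.prod_univ_three] at hp
    rw [hv]
    rcases h 0 with h0 | h0 <;> rcases h 1 with h1 | h1 <;> rcases h 2 with h2 | h2 <;>
      rw [h0, h1, h2] at hp ⊢ <;> first | (exfalso; norm_num at hp; done) | simp [vT]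

theorem octa_signedPerm {A : M3} (hA : A ∈ octa) :
    ∃ (σ : Equiv.Perm (Fin 3)) (s : Fin 3 → ℝ), (∀ j, s j = 1 ∨ s j = -1) ∧
      ∀ i j, A i j = if i = σ j then s j else 0 := by
  have col : ∀ j, ∃ (k : Fin 3) (s : ℝ), (s = 1 ∨ s = -1) ∧
      ∀ i, A i j = if i = k then s else 0 := by
    intro j
    have hj : A.mulVec (Pi.single j 1) ∈ vO := octa_map hA (by
      have : (Pi.single j 1 : Fin 3 → ℝ) = ![Pi.single (M := fun _ => ℝ) j 1 0,
        Pi.single (M := fun _ => ℝ) j 1 1, Pi.single (M := fun _ => ℝ) j 1 2] := by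
        ext i; fin_cases i <;> rfl
      rw [this]
      fin_cases j <;> simp [vO])
    have hc : ∀ i, A i j = A.mulVec (Pi.single j 1) i := by simp
    simp only [hc]
    generalize A.mulVec (Pi.single j 1) = w at hj
    simp only [vO, Set.mem_insert_iff, Set.mem_singleton_iff] at hj
    rcases hj with rfl | rfl | rfl | rfl | rfl | rfl
    · exact ⟨0, 1, by simp, fun i => by fin_cases i <;> simp⟩
    · exact ⟨0, -1, by simp, fun i => by fin_cases i <;> simp⟩
    · exact ⟨1, 1, by simp, fun i => by fin_cases i <;> simp⟩
    · exact ⟨1, -1, by simp, fun i => by fin_cases i <;> simp⟩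
    · exact ⟨2, 1, by simp, fun i => by fin_cases i <;> simp⟩
    · exact ⟨2, -1, by simp, fun i => by fin_cases i <;> simp⟩
  choose σ s hs hAs using col
  have inj : Function.Injective σ := by
    intro j j' h
    by_contra hne
    have h0 := congrFun (congrFun hA.1.1.2 j) j'
    simp only [mul_apply, transpose_apply, hAs, h, one_apply_ne hne] at h0
    rcases hs j with h1 | h1 <;> rcases hs j' with h2 | h2 <;> simp [h1, h2] at h0
  exact ⟨Equiv.ofBijective σ (Finite.injective_iff_bijective.1 inj), s, hs, fun i j => hAs j i⟩

theorem signedPerm_mulVec {A : M3} {σ : Equiv.Perm (Fin 3)} {s : Fin 3 → ℝ}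
    (hA : ∀ i j, A i j = if i = σ j then s j else 0) (v : Fin 3 → ℝ) (j : Fin 3) :
    A.mulVec v (σ j) = s j * v j := by
  simp [mulVec, dotProduct, hA]

theorem prod_signs {s : Fin 3 → ℝ} (hs : ∀ j, s j = 1 ∨ s j = -1) :
    ∏ j, s j = 1 ∨ ∏ j, s j = -1 := by
  rw [Fin.prod_univ_three]
  rcases hs 0 with h0 | h0 <;> rcases hs 1 with h1 | h1 <;> rcases hs 2 with h2 | h2 <;>
    simp [h0, h1, h2]

/-- A signed permutation matrix maps the cube `{±1/3}³` to itself and multiplies the coordinate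
product by the product of its signs. -/
theorem signedPerm_cube {A : M3} {σ : Equiv.Perm (Fin 3)} {s : Fin 3 → ℝ}
    (hs : ∀ j, s j = 1 ∨ s j = -1)
    (hA : ∀ i j, A i j = if i = σ j then s j else 0) {v : Fin 3 → ℝ} (hv : v ∈ vT) :
    (∀ i, A.mulVec v i = 1/3 ∨ A.mulVec v i = -1/3) ∧
      ∏ i, A.mulVec v i = (∏ j, s j) * (1/27) := by
  rw [mem_vT_iff] at hv
  constructor
  · intro i
    obtain ⟨j, rfl⟩ := σ.surjective i
    rw [signedPerm_mulVec hA]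
    rcases hs j with h | h <;> rcases hv.1 j with h' | h' <;> rw [h, h'] <;> norm_num
  · rw [← Equiv.prod_comp σ, ← hv.2, ← Finset.prod_mul_distrib]
    exact Finset.prod_congr rfl fun j _ => signedPerm_mulVec hA v j

/-- The cube's vertices split into two tetrahedra, `vT` and `-vT`; an octahedral rotation
outside `T` exchanges them. -/
theorem octa_cases {A : M3} (hA : A ∈ octa) :
    A ∈ tetra ∨ ∀ v ∈ vT, -(A.mulVec v) ∈ vT := by
  obtain ⟨σ, s, hs, hAs⟩ := octa_signedPerm hA
  rcases prod_signs hs with h | h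
  · left
    refine ⟨hA.1, image_eq_of_mapsTo hA.1 finite_vT fun v hv => ?_⟩
    have := signedPerm_cube hs hAs hv
    rw [h, one_mul] at this
    exact (mem_vT_iff _).2 this
  · right
    intro v hv
    obtain ⟨h1, h2⟩ := signedPerm_cube hs hAs hv
    refine (mem_vT_iff _).2 ⟨fun i => ?_, ?_⟩
    · rcases h1 i with h' | h' <;> simp only [Pi.neg_apply, h'] <;> norm_num
    · rw [Fin.prod_univ_three] at h2 ⊢
      rw [h] at h2
      simp only [Pi.neg_apply]
      linarith

/-- `T` has index at most two in `O`. -/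
theorem mul_transpose_mem_tetra {A B : M3} (hA : A ∈ octa) (hA' : A ∉ tetra)
    (hB : B ∈ octa) (hB' : B ∉ tetra) : A * Bᵀ ∈ tetra := by
  have h := SO3_mul hA.1 (SO3_transpose hB.1)
  refine ⟨h, image_eq_of_mapsTo h finite_vT fun v hv => ?_⟩
  have hBt : Bᵀ ∉ tetra := fun h => hB' (by simpa using tetra_transpose h)
  have h1 := (octa_cases (octa_transpose hB)).resolve_left hBt v hv
  have h2 := (octa_cases hA).resolve_left hA' _ h1
  simpa [mulVec_neg, mulVec_mulVec] using h2

/-! ### Tetrahedral rotations are squares of octahedral rotations -/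

/-- Holds because the octahedron's vertices are the midpoints of the tetrahedron's edges, rescaled
by a factor of three. -/
theorem tetra_subset_octa : tetra ⊆ octa := by
  intro A hA
  have mid : ∀ a ∈ vT, ∀ b ∈ vT, a ≠ b → (3/2 : ℝ) • (a + b) ∈ vO := by
    intro a ha b hb hab
    simp only [vT, Set.mem_insert_iff, Set.mem_singleton_iff] at ha hb
    rcases ha with rfl | rfl | rfl | rfl <;> rcases hb with rfl | rfl | rfl | rfl <;>
      first | exact absurd rfl hab | (simp [vO]; norm_num)
  have mid' : ∀ v ∈ vO, ∃ a ∈ vT, ∃ b ∈ vT, a ≠ b ∧ v = (3/2 : ℝ) • (a + b) := by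
    have key : ∀ v, ∀ a ∈ vT, ∀ b ∈ vT, (a 0 ≠ b 0 ∨ a 1 ≠ b 1) → v = (3/2 : ℝ) • (a + b) →
        ∃ a ∈ vT, ∃ b ∈ vT, a ≠ b ∧ v = (3/2 : ℝ) • (a + b) := by
      intro v a ha b hb hab hv
      refine ⟨a, ha, b, hb, ?_, hv⟩
      rintro rfl
      simp at hab
    intro v hv
    simp only [vO, Set.mem_insert_iff, Set.mem_singleton_iff] at hv
    rcases hv with rfl | rfl | rfl | rfl | rfl | rfl
    · refine key _ ![1/3, 1/3, 1/3] ?_ ![1/3, -1/3, -1/3] ?_ ?_ ?_ <;> simp [vT] <;> norm_num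
    · refine key _ ![-1/3, -1/3, 1/3] ?_ ![-1/3, 1/3, -1/3] ?_ ?_ ?_ <;> simp [vT] <;> norm_num
    · refine key _ ![1/3, 1/3, 1/3] ?_ ![-1/3, 1/3, -1/3] ?_ ?_ ?_ <;> simp [vT] <;> norm_num
    · refine key _ ![-1/3, -1/3, 1/3] ?_ ![1/3, -1/3, -1/3] ?_ ?_ ?_ <;> simp [vT] <;> norm_num
    · refine key _ ![1/3, 1/3, 1/3] ?_ ![-1/3, -1/3, 1/3] ?_ ?_ ?_ <;> simp [vT] <;> norm_num
    · refine key _ ![-1/3, 1/3, -1/3] ?_ ![1/3, -1/3, -1/3] ?_ ?_ ?_ <;> simp [vT] <;> norm_num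
  refine ⟨hA.1, image_eq_of_mapsTo hA.1 finite_vO fun v hv => ?_⟩
  obtain ⟨a, ha, b, hb, hab, rfl⟩ := mid' v hv
  rw [mulVec_smul, mulVec_add]
  exact mid _ (tetra_map hA ha) _ (tetra_map hA hb) ((mulVec_inj hA.1).ne hab)

theorem mulVec_three (A : M3) (v : Fin 3 → ℝ) : A.mulVec v =
    ![A 0 0 * v 0 + A 0 1 * v 1 + A 0 2 * v 2, A 1 0 * v 0 + A 1 1 * v 1 + A 1 2 * v 2,
      A 2 0 * v 0 + A 2 1 * v 1 + A 2 2 * v 2] := by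
  ext i
  fin_cases i <;> simp [mulVec, dotProduct, Fin.sum_univ_three]

theorem quarterTurn_x_mem : (!![1, 0, 0; 0, 0, -1; 0, 1, 0] : M3) ∈ octa := by
  have h : (!![1, 0, 0; 0, 0, -1; 0, 1, 0] : M3) ∈ SO3 := by
    refine ⟨⟨?_, ?_⟩, by simp [det_fin_three]⟩ <;> ext i j <;> fin_cases i <;> fin_cases j <;>
      simp [mul_apply, Fin.sum_univ_three]
  refine ⟨h, image_eq_of_mapsTo h finite_vO fun v hv => ?_⟩
  simp only [vO, Set.mem_insert_iff, Set.mem_singleton_iff] at hv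
  rcases hv with rfl | rfl | rfl | rfl | rfl | rfl <;> rw [mulVec_three] <;> simp [vO]

theorem quarterTurn_y_mem : (!![0, 0, 1; 0, 1, 0; -1, 0, 0] : M3) ∈ octa := by
  have h : (!![0, 0, 1; 0, 1, 0; -1, 0, 0] : M3) ∈ SO3 := by
    refine ⟨⟨?_, ?_⟩, by simp [det_fin_three]⟩ <;> ext i j <;> fin_cases i <;> fin_cases j <;>
      simp [mul_apply, Fin.sum_univ_three]
  refine ⟨h, image_eq_of_mapsTo h finite_vO fun v hv => ?_⟩
  simp only [vO, Set.mem_insert_iff, Set.mem_singleton_iff] at hv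
  rcases hv with rfl | rfl | rfl | rfl | rfl | rfl <;> rw [mulVec_three] <;> simp [vO]

theorem quarterTurn_z_mem : (!![0, -1, 0; 1, 0, 0; 0, 0, 1] : M3) ∈ octa := by
  have h : (!![0, -1, 0; 1, 0, 0; 0, 0, 1] : M3) ∈ SO3 := by
    refine ⟨⟨?_, ?_⟩, by simp [det_fin_three]⟩ <;> ext i j <;> fin_cases i <;> fin_cases j <;>
      simp [mul_apply, Fin.sum_univ_three]
  refine ⟨h, image_eq_of_mapsTo h finite_vO fun v hv => ?_⟩
  simp only [vO, Set.mem_insert_iff, Set.mem_singleton_iff] at hv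
  rcases hv with rfl | rfl | rfl | rfl | rfl | rfl <;> rw [mulVec_three] <;> simp [vO]

/-- The nontrivial elements of `T` are the half-turns about the coordinate axes, which are squares
of quarter-turns in `O`, and rotations of order three, for which `A = (A²)²`. -/
theorem tetra_sq {A : M3} (hA : A ∈ tetra) : ∃ B ∈ octa, B * B = A := by
  have hO := tetra_subset_octa hA
  obtain ⟨σ, s, hs, hAs⟩ := octa_signedPerm hO
  have hprod : s 0 * s 1 * s 2 = 1 := by
    have hv : (![1/3, 1/3, 1/3] : Fin 3 → ℝ) ∈ vT := by simp [vT]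
    have h1 := (signedPerm_cube hs hAs hv).2
    rw [((mem_vT_iff _).1 (tetra_map hA hv)).2, Fin.prod_univ_three] at h1
    linarith
  have cube : A * A * A = 1 → ∃ B ∈ octa, B * B = A := fun h =>
    ⟨A * A, octa_mul hO hO, by rw [← Matrix.mul_assoc, h, Matrix.one_mul]⟩
  have hdet : A.det = 1 := hA.1.2
  have i01 : σ 0 ≠ σ 1 := σ.injective.ne (by decide)
  have i02 : σ 0 ≠ σ 2 := σ.injective.ne (by decide)
  have i12 : σ 1 ≠ σ 2 := σ.injective.ne (by decide)
  have hAe : A = of fun i j => ![if i = σ 0 then s 0 else 0, if i = σ 1 then s 1 else 0,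
      if i = σ 2 then s 2 else 0] j := by
    ext i j; rw [hAs]; fin_cases j <;> rfl
  have h3 : ∀ k : Fin 3, k = 0 ∨ k = 1 ∨ k = 2 := by decide
  rcases h3 (σ 0) with a | a | a <;> rcases h3 (σ 1) with b | b | b <;>
    rcases h3 (σ 2) with c | c | c <;> rw [a, b, c] at hAe <;>
    simp only [a, b, c, ne_eq, not_true_eq_false] at i01 i02 i12
  · clear cube
    rcases hs 0 with h0 | h0 <;> rcases hs 1 with h1 | h1 <;> rcases hs 2 with h2 | h2 <;>
      rw [h0, h1, h2] at hprod hAe <;> try (exfalso; norm_num at hprod; done)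
    · refine ⟨A, hO, ?_⟩
      rw [hAe]; ext i j; fin_cases i <;> fin_cases j <;> simp [mul_apply]
    · refine ⟨_, quarterTurn_x_mem, ?_⟩
      rw [hAe]; ext i j; fin_cases i <;> fin_cases j <;> simp [mul_apply, Fin.sum_univ_three]
    · refine ⟨_, quarterTurn_y_mem, ?_⟩
      rw [hAe]; ext i j; fin_cases i <;> fin_cases j <;> simp [mul_apply, Fin.sum_univ_three]
    · refine ⟨_, quarterTurn_z_mem, ?_⟩
      rw [hAe]; ext i j; fin_cases i <;> fin_cases j <;> simp [mul_apply, Fin.sum_univ_three]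
  all_goals first
    | (exfalso
       rw [hAe, det_fin_three] at hdet
       simp at hdet
       linarith)
    | (apply cube
       rw [hAe]
       ext i j
       fin_cases i <;> fin_cases j <;> simp [mul_apply, Fin.sum_univ_three] <;> linarith)

/-! ### Subgroups of `O(3)` projecting onto `O` -/

theorem det_eq_or {A : M3} (hA : A ∈ O3) : A.det = 1 ∨ A.det = -1 := by
  have h := congrArg det hA.1
  rw [det_mul, det_transpose, det_one] at h
  exact mul_self_eq_one_iff.1 h

theorem eq_of_prS_eq_octa {R : Set M3} (hR : IsSubgroupO3 R) (hnot : ¬ R ⊆ SO3)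
    (hpr : prS R = octa) :
    R = prodZ octa ∨ R = tetra ∪ (fun A : M3 => -A) '' (octa \ tetra) := by
  have pr_or : ∀ A ∈ R, pr A = A ∨ pr A = -A := by
    intro A hA
    rcases det_eq_or (hR.subset_O3 hA) with h | h <;> simp [pr, h]
  have down : ∀ A ∈ R, A ∈ octa ∨ -A ∈ octa := by
    intro A hA
    have h : pr A ∈ octa := hpr ▸ Set.mem_image_of_mem pr hA
    rcases pr_or A hA with h' | h' <;> rw [h'] at h <;> tauto
  have up : ∀ A ∈ octa, A ∈ R ∨ -A ∈ R := by
    intro A hA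
    rw [← hpr] at hA
    obtain ⟨B, hB, rfl⟩ := hA
    rcases pr_or B hB with h' | h' <;> rw [h'] <;> simp [hB]
  have tetra_sub : tetra ⊆ R := by
    intro A hA
    obtain ⟨B, hB, rfl⟩ := tetra_sq hA
    rcases up B hB with h | h
    · exact hR.mul_mem h h
    · simpa using hR.mul_mem h h
  by_cases hneg : (-1 : M3) ∈ R
  · left
    have neg_mem : ∀ A, -A ∈ R → A ∈ R := fun A h => by simpa using hR.mul_mem hneg h
    ext A
    constructor
    · intro hA
      rcases down A hA with h | h
      · exact Or.inl h
      · exact Or.inr ⟨-A, h, neg_neg A⟩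
    · rintro (h | ⟨B, h, rfl⟩)
      · exact (up A h).elim id (neg_mem A)
      · exact (up B h).elim (fun h => neg_mem _ (by simpa using h)) id
  · right
    have not_both : ∀ A, A ∈ R → -A ∉ R := by
      intro A h h'
      have := hR.mul_mem h' (hR.transpose_mem h)
      rw [Matrix.neg_mul, (hR.subset_O3 h).1] at this
      exact hneg this
    have rot_mem_tetra : ∀ A ∈ R, A ∈ octa → A ∈ tetra := by
      intro A hA hAO
      by_contra hAT
      -- Then `O = T ∪ T A ⊆ R`, so an improper `B ∈ R` would give both `B` and `-B` in `R`.
      have octa_sub : ∀ B ∈ octa, B ∈ R := by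
        intro B hB
        by_cases hBT : B ∈ tetra
        · exact tetra_sub hBT
        · have := hR.mul_mem (tetra_sub (mul_transpose_mem_tetra hB hBT hAO hAT)) hA
          rwa [Matrix.mul_assoc, hAO.1.1.2, Matrix.mul_one] at this
      apply hnot
      intro B hB
      rcases down B hB with h | h
      · exact h.1
      · exact absurd (octa_sub _ h) (not_both B hB)
    ext A
    constructor
    · intro hA
      rcases down A hA with h | h
      · exact Or.inl (rot_mem_tetra A hA h)
      · exact Or.inr ⟨-A, ⟨h, fun hT => not_both A hA (tetra_sub hT)⟩, neg_neg A⟩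
    · rintro (h | ⟨B, ⟨hB, hBT⟩, rfl⟩)
      · exact tetra_sub h
      · exact (up B hB).resolve_left fun h => hBT (rot_mem_tetra B h hB)

theorem IsSubgroupO3.conj {R : Set M3} (hR : IsSubgroupO3 R) {P : M3} (hP : P ∈ O3) :
    IsSubgroupO3 ((fun A => P * A * Pᵀ) '' R) := by
  have mul : ∀ A B : M3, P * A * Pᵀ * (P * B * Pᵀ) = P * (A * B) * Pᵀ := by
    intro A B
    calc P * A * Pᵀ * (P * B * Pᵀ) = P * A * (Pᵀ * P) * B * Pᵀ := by
          simp only [Matrix.mul_assoc]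
      _ = _ := by rw [hP.2]; simp only [Matrix.mul_assoc, Matrix.one_mul]
  have tr : ∀ A : M3, (P * A * Pᵀ)ᵀ = P * Aᵀ * Pᵀ := by
    intro A
    simp [transpose_mul, Matrix.mul_assoc]
  refine ⟨?_, ⟨1, hR.one_mem, by simp [hP.1]⟩, ?_, ?_⟩
  · rintro _ ⟨A, hA, rfl⟩
    have := hR.subset_O3 hA
    constructor
    · simp only [tr, mul, this.1, Matrix.mul_one, hP.1]
    · simp only [tr, mul, this.2, Matrix.mul_one, hP.1]
  · rintro _ _ ⟨A, hA, rfl⟩ ⟨B, hB, rfl⟩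
    exact ⟨A * B, hR.mul_mem hA hB, (mul A B).symm⟩
  · rintro _ ⟨A, hA, rfl⟩
    exact ⟨Aᵀ, hR.transpose_mem hA, (tr A).symm⟩

theorem det_conj {P : M3} (hP : P ∈ O3) (A : M3) : (P * A * Pᵀ).det = A.det := by
  rw [det_mul_comm, ← Matrix.mul_assoc, hP.2, Matrix.one_mul]

/-- Let `R` be a finite subgroup of `O(3)` not contained in `SO(3)`,
and suppose `pr(R)` is conjugate in `O(3)` to the octahedral group `O`.  Then `R` is
conjugate in `O(3)` either to `O × Z = {±g : g ∈ O}` or to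
`⟨T, -o₀⟩ = T ∪ {-g : g ∈ O \ T}`. -/
theorem statement4 (R : Set M3) (hR : IsSubgroupO3 R) (hfin : R.Finite)
    (hnotrot : ¬ R ⊆ SO3) (hconj : ConjO3 (prS R) octa) :
    ConjO3 R (prodZ octa) ∨
    ConjO3 R (tetra ∪ (fun A : M3 => -A) '' (octa \ tetra)) := by
  obtain ⟨P, hP, hS⟩ := hconj
  have hpr : prS ((fun A => P * A * Pᵀ) '' R) = octa := by
    rw [hS, prS, prS, Set.image_image, Set.image_image]
    refine Set.image_congr fun A _ => ?_
    simp [pr, det_conj hP]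
  have hnot : ¬ (fun A => P * A * Pᵀ) '' R ⊆ SO3 := by
    refine fun h => hnotrot fun A hA => ⟨hR.subset_O3 hA, ?_⟩
    rw [← det_conj hP A]
    exact (h ⟨A, hA, rfl⟩).2
  rcases eq_of_prS_eq_octa (hR.conj hP) hnot hpr with h | h
  · exact Or.inl ⟨P, hP, h.symm⟩
  · exact Or.inr ⟨P, hP, h.symm⟩
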